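/- Let F: S → T be a triangle functor between compactly generated triangulated categories, and assume F has a right adjoint G: T → S. Then the following are equivalent: (i) G preserves coproducts; (ii) G admits a right adjoint H, i.e. there is an adjoint triple (F,G,H); (iii) F preserves compact objects. -/

import Mathlib

/-!
Statement 4 (Neeman, Lemma 3.3): for a triangle functor `F : S ⥤ T` between compactly
generated triangulated categories admitting a right adjoint `G`, TFAE: `G` preserves
coproducts; `G` has a right adjoint (adjoint triple `(F, G, H)`); `F` preserves compact
objects.
-/

namespace LadderFormalization

open CategoryTheory Category Limits Pretriangulated Opposite

universe v u₁ u₂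

variable {S : Type u₁} [Category.{v} S] [HasZeroObject S] [HasShift S ℤ] [Preadditive S]
  [∀ n : ℤ, (shiftFunctor S n).Additive] [Pretriangulated S]
  {T : Type u₂} [Category.{v} T] [HasZeroObject T] [HasShift T ℤ] [Preadditive T]
  [∀ n : ℤ, (shiftFunctor T n).Additive] [Pretriangulated T]

/-- An object `X` is compact if `Hom(X, -)` (as a functor to abelian groups) preserves
all small coproducts. -/
def IsCompactObj {C : Type u₁} [Category.{v} C] [Preadditive C] (X : C) : Prop :=
  ∀ J : Type v, PreservesColimitsOfShape (Discrete J) (preadditiveCoyoneda.obj (op X))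

/-- A functor preserves all small coproducts. -/
def PreservesCoproducts {C : Type u₁} [Category.{v} C] {D : Type u₂} [Category.{v} D]
    (F : C ⥤ D) : Prop :=
  ∀ J : Type v, PreservesColimitsOfShape (Discrete J) F

/-- A pretriangulated category is compactly generated if it has small coproducts and a
set of compact generators. -/
def CompactlyGenerated (C : Type u₁) [Category.{v} C] [Preadditive C]
    [HasShift C ℤ] : Prop :=
  HasCoproducts.{v} C ∧
  ∃ (ι : Type v) (G : ι → C), (∀ i, IsCompactObj (G i)) ∧
    ∀ Y : C, (∀ (i : ι) (n : ℤ) (f : G i ⟶ Y⟦n⟧), f = 0) → IsZero Y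

set_option linter.unusedSectionVars false

section Compact

variable {C : Type u₁} [Category.{v} C] [Preadditive C]

/-- A subgroup of `Hom(X, ∐ Y)`, `X` compact, containing all maps through the summands is
everything. -/
lemma IsCompactObj.eq_top {X : C} (hX : IsCompactObj X) {J : Type v} (Y : J → C)
    [HasCoproduct Y] (A : AddSubgroup (X ⟶ ∐ Y))
    (hA : ∀ (j : J) (k : X ⟶ Y j), k ≫ Sigma.ι Y j ∈ A) (h : X ⟶ ∐ Y) : h ∈ A := by
  have := hX J
  have hc := isColimitOfPreserves (preadditiveCoyoneda.obj (op X))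
    (colimit.isColimit (Discrete.functor Y))
  let q : (preadditiveCoyoneda.obj (op X)).obj (∐ Y) ⟶
      AddCommGrpCat.of ((X ⟶ ∐ Y) ⧸ A) := AddCommGrpCat.ofHom (QuotientAddGroup.mk' A)
  have hq : q = 0 := by
    refine hc.hom_ext ?_
    rintro ⟨j⟩
    ext k
    have := (QuotientAddGroup.eq_zero_iff (N := A) (k ≫ Sigma.ι Y j)).2 (hA j k)
    exact this
  have h2 : q.hom h = 0 := by rw [hq]; rfl
  exact (QuotientAddGroup.eq_zero_iff (N := A) h).1 h2

open Classical in
/-- The projection from a coproduct onto a summand. -/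
noncomputable def proj {J : Type v} (Y : J → C) [HasCoproduct Y] (j : J) : ∐ Y ⟶ Y j :=
  Sigma.desc fun i => if h : i = j then eqToHom (by rw [h]) else 0

lemma ι_proj_self {J : Type v} (Y : J → C) [HasCoproduct Y] (j : J) :
    Sigma.ι Y j ≫ proj Y j = 𝟙 _ := by
  simp [proj]

lemma ι_proj_ne {J : Type v} (Y : J → C) [HasCoproduct Y] {i j : J} (h : i ≠ j) :
    Sigma.ι Y i ≫ proj Y j = 0 := by
  simp [proj, h]

lemma IsCompactObj.eq_zero {X : C} (hX : IsCompactObj X) {J : Type v} (Y : J → C)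
    [HasCoproduct Y] (h : X ⟶ ∐ Y) (hh : ∀ j, h ≫ proj Y j = 0) : h = 0 := by
  classical
  let A : AddSubgroup (X ⟶ ∐ Y) :=
    { carrier := { h | ∃ s : Finset J, ∀ s' : Finset J, s ⊆ s' →
        h = ∑ j ∈ s', h ≫ proj Y j ≫ Sigma.ι Y j }
      zero_mem' := ⟨∅, by simp⟩
      add_mem' := by
        rintro a b ⟨s, hs⟩ ⟨t, ht⟩
        refine ⟨s ∪ t, fun s' hs' => ?_⟩
        simp only [Preadditive.add_comp, Finset.sum_add_distrib]
        rw [← hs s' (Finset.union_subset_left hs'), ← ht s' (Finset.union_subset_right hs')]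
      neg_mem' := by
        rintro a ⟨s, hs⟩
        refine ⟨s, fun s' hs' => ?_⟩
        simp only [Preadditive.neg_comp, Finset.sum_neg_distrib]
        rw [← hs s' hs'] }
  obtain ⟨s, hs⟩ := hX.eq_top Y A (fun j k => ⟨{j}, fun s' hs' => by
    rw [Finset.sum_eq_single j]
    · simp [reassoc_of% (ι_proj_self Y j)]
    · intro b _ hb
      simp [reassoc_of% (ι_proj_ne Y hb.symm)]
    · intro hj
      exact (hj (hs' (by simp))).elim⟩) h
  rw [hs s subset_rfl]
  exact Finset.sum_eq_zero fun j _ => by rw [← assoc, hh, zero_comp]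

end Compact

section Adj

variable {C : Type u₁} [Category.{v} C] [Preadditive C]
  {D : Type u₂} [Category.{v} D] [Preadditive D]

lemma isCompactObj_of_adj {F : C ⥤ D} {G : D ⥤ C} [F.Additive] (adj : F ⊣ G)
    (hG : PreservesCoproducts G) (X : C) (hX : IsCompactObj X) : IsCompactObj (F.obj X) := by
  intro J
  have := hX J
  have := hG J
  have : G.Additive := adj.right_adjoint_additive
  let e : G ⋙ preadditiveCoyoneda.obj (op X) ≅ preadditiveCoyoneda.obj (op (F.obj X)) :=
    NatIso.ofComponents (fun Y => (adj.homAddEquiv X Y).symm.toAddCommGrpIso) (by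
      intro Y Z f
      ext g
      exact adj.homEquiv_naturality_right_symm g f)
  exact preservesColimitsOfShape_of_natIso e

lemma isCompactObj_equivalence (e : C ≌ D) [e.functor.Additive] (X : C) (hX : IsCompactObj X) :
    IsCompactObj (e.functor.obj X) :=
  isCompactObj_of_adj e.toAdjunction (fun _ => inferInstance) X hX

/-- Descent out of the image of a coproduct. -/
lemma exists_desc {G : C ⥤ D} (hG : PreservesCoproducts G) {J : Type v} (K : J → C)
    [HasCoproduct K] {Y : D} (a : ∀ j, G.obj (K j) ⟶ Y) :
    ∃ b : G.obj (∐ K) ⟶ Y, ∀ j, G.map (Sigma.ι K j) ≫ b = a j := by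
  have := hG J
  let hc := isColimitOfPreserves G (colimit.isColimit (Discrete.functor K))
  refine ⟨hc.desc ⟨Y, Discrete.natTrans fun j => a j.as⟩, fun j => ?_⟩
  exact hc.fac ⟨Y, Discrete.natTrans fun j => a j.as⟩ ⟨j⟩

lemma coprod_hom_ext {G : C ⥤ D} (hG : PreservesCoproducts G) {J : Type v} (K : J → C)
    [HasCoproduct K] {Y : D} {a b : G.obj (∐ K) ⟶ Y}
    (h : ∀ j, G.map (Sigma.ι K j) ≫ a = G.map (Sigma.ι K j) ≫ b) : a = b := by
  have := hG J
  let hc := isColimitOfPreserves G (colimit.isColimit (Discrete.functor K))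
  exact hc.hom_ext fun ⟨j⟩ => h j

end Adj

lemma isCompactObj_shift {X : T} (hX : IsCompactObj X) (n : ℤ) : IsCompactObj (X⟦n⟧) :=
  have : (shiftEquiv T n).functor.Additive := inferInstanceAs (shiftFunctor T n).Additive
  isCompactObj_equivalence (shiftEquiv T n) X hX

/-- A predicate closed under coproducts and cones. -/
structure Localizing [HasCoproducts.{v} T] (P : T → Prop) : Prop where
  coprod : ∀ {J : Type v} (K : J → T), (∀ j, P (K j)) → P (∐ K)
  cone : ∀ A : Triangle T, A ∈ distTriang T → P A.obj₁ → P A.obj₂ → P A.obj₃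

lemma exact₂ (G : T ⥤ S) [G.CommShift ℤ] [G.IsTriangulated] {Y : S} {A B C : T}
    {a : A ⟶ B} {b : B ⟶ C} {c : C ⟶ A⟦(1 : ℤ)⟧} (hA : Triangle.mk a b c ∈ distTriang T)
    (y : G.obj B ⟶ Y) (hy : G.map a ≫ y = 0) :
    ∃ c : G.obj C ⟶ Y, y = G.map b ≫ c :=
  Triangle.yoneda_exact₂ _ (G.map_distinguished _ hA) y hy

lemma shift_inj {A B c : T} (f : A ⟶ B) (hf : ∀ k : c⟦(-1 : ℤ)⟧ ⟶ A, k ≫ f = 0 → k = 0)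
    (k : c ⟶ A⟦(1 : ℤ)⟧) (hk : k ≫ f⟦(1 : ℤ)⟧' = 0) : k = 0 := by
  let e := shiftFunctorCompIsoId T (1 : ℤ) (-1) (by simp)
  have h1 : k⟦(-1 : ℤ)⟧' ≫ e.hom.app A = 0 := by
    apply hf
    have : e.hom.app A ≫ f = (f⟦(1 : ℤ)⟧')⟦(-1 : ℤ)⟧' ≫ e.hom.app B := (e.hom.naturality f).symm
    rw [assoc, this, ← assoc, ← Functor.map_comp, hk, Functor.map_zero, zero_comp]
  have h2 : k⟦(-1 : ℤ)⟧' = 0 := by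
    rw [← cancel_mono (e.hom.app A), h1, zero_comp]
  exact (shiftFunctor T (-1 : ℤ)).map_injective (by rw [h2, Functor.map_zero])

/-- The natural comparison map is bijective at `Z`. -/
def Bij (G : T ⥤ S) {Y : S} {X : T} (ε : G.obj X ⟶ Y) (Z : T) : Prop :=
  Function.Bijective (fun f : Z ⟶ X => G.map f ≫ ε)

lemma Bij.of_iso {G : T ⥤ S} {Y : S} {X : T} {ε : G.obj X ⟶ Y} {Z Z' : T} (e : Z ≅ Z')
    (h : Bij G ε Z) : Bij G ε Z' := by
  constructor
  · intro a b hab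
    have : e.hom ≫ a = e.hom ≫ b := h.1 (by simp only [Functor.map_comp, assoc] at hab ⊢; rw [hab])
    exact (cancel_epi _).1 this
  · intro y
    obtain ⟨f, hf⟩ := h.2 (G.map e.hom ≫ y)
    refine ⟨e.inv ≫ f, ?_⟩
    dsimp at hf ⊢
    rw [Functor.map_comp, assoc, hf, ← assoc, ← Functor.map_comp]
    simp

lemma Bij.eq_zero {G : T ⥤ S} [G.Additive] {Y : S} {X : T} {ε : G.obj X ⟶ Y} {Z : T}
    (h : Bij G ε Z) {f : Z ⟶ X} (hf : G.map f ≫ ε = 0) : f = 0 :=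
  h.1 (by simpa using hf)

lemma Bij.five (G : T ⥤ S) [G.CommShift ℤ] [G.IsTriangulated] {Y : S} {X : T}
    {ε : G.obj X ⟶ Y} {A B C : T} {u : A ⟶ B} {v : B ⟶ C} {w : C ⟶ A⟦(1 : ℤ)⟧}
    (hA : Triangle.mk u v w ∈ distTriang T)
    (h1 : Bij G ε A) (h2 : Bij G ε B) (h1' : Bij G ε (A⟦(1 : ℤ)⟧))
    (h2' : Bij G ε (B⟦(1 : ℤ)⟧)) : Bij G ε C := by
  have hA' : Triangle.mk v w (-u⟦(1 : ℤ)⟧') ∈ distTriang T := rot_of_distTriang _ hA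
  have hA'' : Triangle.mk w (-u⟦(1 : ℤ)⟧') (-v⟦(1 : ℤ)⟧') ∈ distTriang T :=
    rot_of_distTriang _ hA'
  have huv : u ≫ v = 0 := comp_distTriang_mor_zero₁₂ _ hA
  have hwu : w ≫ (-u⟦(1 : ℤ)⟧') = 0 := comp_distTriang_mor_zero₁₂ _ hA''
  constructor
  · intro f₁ f₂ hf
    rw [← sub_eq_zero]
    obtain ⟨f, hf'⟩ : ∃ f, f = f₁ - f₂ := ⟨_, rfl⟩
    rw [← hf']
    have hf : G.map f ≫ ε = 0 := by
      dsimp at hf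
      rw [hf', G.map_sub, Preadditive.sub_comp, hf, sub_self]
    have h0 : v ≫ f = 0 := h2.eq_zero (by rw [Functor.map_comp, assoc, hf, comp_zero])
    obtain ⟨h, hh⟩ : ∃ h : A⟦(1 : ℤ)⟧ ⟶ X, f = w ≫ h := Triangle.yoneda_exact₃ _ hA f h0
    obtain ⟨k, hk⟩ := exact₂ G hA'' (G.map h ≫ ε) (by
      rw [← assoc, ← Functor.map_comp, ← hh, hf])
    obtain ⟨m, hm⟩ := h2'.2 k
    dsimp only at hm
    have : h = (-u⟦(1 : ℤ)⟧') ≫ m := h1'.1 (by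
      dsimp only
      rw [Functor.map_comp, assoc, hm, hk])
    rw [hh, this, ← assoc, hwu, zero_comp]
  · intro y
    obtain ⟨b, hb⟩ := h2.2 (G.map v ≫ y)
    dsimp only at hb
    have h0 : u ≫ b = 0 := h1.eq_zero (by
      rw [Functor.map_comp, assoc, hb, ← assoc, ← Functor.map_comp, huv, G.map_zero, zero_comp])
    obtain ⟨c, hc⟩ : ∃ c : C ⟶ X, b = v ≫ c := Triangle.yoneda_exact₂ _ hA b h0
    obtain ⟨k, hk⟩ := exact₂ G hA' (y - G.map c ≫ ε) (by
      rw [Preadditive.comp_sub, ← hb, hc, Functor.map_comp, assoc, sub_self])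
    obtain ⟨h, hh⟩ := h1'.2 k
    dsimp only at hh
    refine ⟨c + w ≫ h, ?_⟩
    dsimp only
    rw [G.map_add, Preadditive.add_comp, Functor.map_comp, assoc, hh, ← hk]
    abel

/-- One step of the construction. -/
lemma step [HasCoproducts.{v} T] (G : T ⥤ S) [G.CommShift ℤ] [G.IsTriangulated]
    (hG : PreservesCoproducts G) {ι : Type v} (g : ι → T) (P : T → Prop) (hP : Localizing P)
    (hg : ∀ i, P (g i)) {Y : S} (X : T) (hX : P X) (ε : G.obj X ⟶ Y) :
    ∃ (X' : T) (ε' : G.obj X' ⟶ Y) (t : X ⟶ X'), P X' ∧ G.map t ≫ ε' = ε ∧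
      ∀ (i : ι) (f : g i ⟶ X), G.map f ≫ ε = 0 → f ≫ t = 0 := by
  let J := Σ i : ι, { f : g i ⟶ X // G.map f ≫ ε = 0 }
  let K : J → T := fun j => g j.1
  let κ : ∐ K ⟶ X := Sigma.desc fun j => j.2.1
  obtain ⟨X', t, w, hA⟩ := distinguished_cocone_triangle κ
  obtain ⟨ε', hε'⟩ := exact₂ G hA ε (by
    apply coprod_hom_ext hG
    intro j
    rw [comp_zero, ← assoc, ← Functor.map_comp]
    have : Sigma.ι K j ≫ κ = j.2.1 := by simp [κ]
    exact (by rw [this]; exact j.2.2))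
  refine ⟨X', ε', t, hP.cone _ hA (hP.coprod K fun j => hg _) hX, hε'.symm, fun i f hf => ?_⟩
  have : f = Sigma.ι K ⟨i, f, hf⟩ ≫ κ := by simp [κ]
  have h0 : κ ≫ t = 0 := comp_distTriang_mor_zero₁₂ _ hA
  rw [this, assoc, h0, comp_zero]

/-- Telescope: homotopy colimits. -/
lemma telescope [HasCoproducts.{v} T] (G : T ⥤ S) [G.CommShift ℤ] [G.IsTriangulated]
    (hG : PreservesCoproducts G) (P : T → Prop) (hP : Localizing P) {Y : S}
    (X : ℕ → T) (hX : ∀ n, P (X n)) (ε : ∀ n, G.obj (X n) ⟶ Y) (t : ∀ n, X n ⟶ X (n + 1))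
    (ht : ∀ n, G.map (t n) ≫ ε (n + 1) = ε n) :
    ∃ (Z : T) (_ : P Z) (u : ∀ n, X n ⟶ Z) (e : G.obj Z ⟶ Y),
      (∀ n, t n ≫ u (n + 1) = u n) ∧ (∀ n, G.map (u n) ≫ e = ε n) ∧
      ∀ (c : T), IsCompactObj c → ∀ f : c ⟶ Z, ∃ (n : ℕ) (k : c ⟶ X n), f = k ≫ u n := by
  let K : ULift.{v} ℕ → T := fun n => X n.down
  let sh : ∐ K ⟶ ∐ K := Sigma.desc fun n => t n.down ≫ Sigma.ι K ⟨n.down + 1⟩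
  have hsh : ∀ n, Sigma.ι K ⟨n⟩ ≫ sh = t n ≫ Sigma.ι K ⟨n + 1⟩ := fun n => by simp [sh]
  let d : ∐ K ⟶ ∐ K := 𝟙 _ - sh
  obtain ⟨Z, p, q, hA⟩ := distinguished_cocone_triangle d
  obtain ⟨e₀, he₀⟩ := exists_desc hG K (Y := Y) (fun n => ε n.down)
  obtain ⟨e, he⟩ := exact₂ G hA e₀ (by
    apply coprod_hom_ext hG
    rintro ⟨n⟩
    rw [comp_zero, ← assoc, ← Functor.map_comp]
    have : Sigma.ι K ⟨n⟩ ≫ d = Sigma.ι K ⟨n⟩ - t n ≫ Sigma.ι K ⟨n + 1⟩ := by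
      simp only [d, Preadditive.comp_sub, comp_id, hsh]
    rw [this, G.map_sub, Preadditive.sub_comp, Functor.map_comp, assoc, he₀, he₀]
    exact sub_eq_zero.2 (ht n).symm)
  have hdp : d ≫ p = 0 := comp_distTriang_mor_zero₁₂ _ hA
  have hu : ∀ n, t n ≫ Sigma.ι K ⟨n + 1⟩ ≫ p = Sigma.ι K ⟨n⟩ ≫ p := fun n => by
    have : sh ≫ p = p := by
      have h := hdp
      simp only [d, Preadditive.sub_comp, id_comp] at h
      exact (sub_eq_zero.1 h).symm
    rw [← assoc, ← hsh, assoc, this]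
  -- `d` is injective on maps from compacts
  have hinj : ∀ (c : T), IsCompactObj c → ∀ h : c ⟶ ∐ K, h ≫ d = 0 → h = 0 := by
    intro c hc h hd
    have hd' : h = h ≫ sh := by
      simpa [d, Preadditive.comp_sub, sub_eq_zero] using hd
    apply hc.eq_zero K h
    rintro ⟨n⟩
    induction n with
    | zero =>
      have : sh ≫ proj K ⟨0⟩ = 0 := by
        apply Sigma.hom_ext
        rintro ⟨m⟩
        rw [← assoc, hsh, assoc, ι_proj_ne K (by simp), comp_zero, comp_zero]
      rw [hd', assoc, this, comp_zero]
    | succ n ih =>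
      have : sh ≫ proj K ⟨n + 1⟩ = proj K ⟨n⟩ ≫ t n := by
        apply Sigma.hom_ext
        rintro ⟨m⟩
        rw [← assoc, hsh, assoc, ← assoc (Sigma.ι K ⟨m⟩)]
        by_cases hm : m = n
        · subst hm
          rw [ι_proj_self, ι_proj_self]
          exact (comp_id _).trans (id_comp _).symm
        · rw [ι_proj_ne K (by simpa using hm), ι_proj_ne K (by simpa using hm),
            comp_zero, zero_comp]
      rw [hd', assoc, this, ← assoc, ih, zero_comp]
  have hinj' : ∀ (c : T), IsCompactObj c → ∀ h : c ⟶ (∐ K)⟦(1 : ℤ)⟧, h ≫ d⟦(1 : ℤ)⟧' = 0 →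
      h = 0 := by
    intro c hc h hd
    exact shift_inj d (hinj _ (isCompactObj_shift hc (-1))) h hd
  refine ⟨Z, hP.cone _ hA (hP.coprod K fun n => hX _) (hP.coprod K fun n => hX _),
    fun n => Sigma.ι K ⟨n⟩ ≫ p, e, hu, fun n => ?_, fun c hc f => ?_⟩
  · rw [Functor.map_comp, assoc, ← he, he₀]
  · have hfq : f ≫ q = 0 := hinj' c hc _ (by
      rw [assoc]
      have : q ≫ d⟦(1 : ℤ)⟧' = 0 := comp_distTriang_mor_zero₃₁ _ hA
      rw [this, comp_zero])
    obtain ⟨h, hh⟩ : ∃ h : c ⟶ ∐ K, f = h ≫ p := Triangle.coyoneda_exact₃ _ hA f hfq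
    have hmono : ∀ (m n : ℕ) (k : c ⟶ X n), ∃ k' : c ⟶ X (n + m),
        k ≫ Sigma.ι K ⟨n⟩ ≫ p = k' ≫ Sigma.ι K ⟨n + m⟩ ≫ p := by
      intro m n k
      induction m with
      | zero => exact ⟨k, rfl⟩
      | succ m ih =>
        obtain ⟨k', hk'⟩ := ih
        refine ⟨k' ≫ t (n + m), ?_⟩
        rw [hk', ← hu]
        simp only [assoc]
        rfl
    let A : AddSubgroup (c ⟶ ∐ K) :=
      { carrier := { h | ∃ (n : ℕ) (k : c ⟶ X n), h ≫ p = k ≫ Sigma.ι K ⟨n⟩ ≫ p }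
        zero_mem' := ⟨0, 0, by simp⟩
        add_mem' := by
          rintro a b ⟨n, k, hk⟩ ⟨n', l, hl⟩
          obtain ⟨k', hk'⟩ := hmono n' n k
          obtain ⟨l', hl'⟩ := hmono n n' l
          rw [hk'] at hk
          rw [hl'] at hl
          clear hk' hl'
          revert l'
          rw [add_comm n' n]
          intro l' hl
          exact ⟨n + n', k' + l', by rw [Preadditive.add_comp, hk, hl, Preadditive.add_comp]⟩
        neg_mem' := by
          rintro a ⟨n, k, hk⟩
          exact ⟨n, -k, by rw [Preadditive.neg_comp, hk, Preadditive.neg_comp]⟩ }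
    obtain ⟨n, k, hk⟩ := hc.eq_top K A (fun j k => ⟨j.down, k, by rw [assoc]⟩) h
    exact ⟨n, k, by rw [hh, hk]⟩

/-- Approximation. -/
lemma approx [HasCoproducts.{v} T] (G : T ⥤ S) [G.CommShift ℤ] [G.IsTriangulated]
    (hG : PreservesCoproducts G) {ι : Type v} (g : ι → T) (hgc : ∀ i, IsCompactObj (g i))
    (P : T → Prop) (hP : Localizing P)
    (hg : ∀ i, P (g i)) (Y : S) :
    ∃ (X : T) (ε : G.obj X ⟶ Y), P X ∧ ∀ i, Bij G ε (g i) := by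
  let J := Σ i : ι, (G.obj (g i) ⟶ Y)
  let K : J → T := fun j => g j.1
  obtain ⟨ε₀, hε₀⟩ := exists_desc hG K (Y := Y) (fun j => j.2)
  let D := { x : Σ X : T, (G.obj X ⟶ Y) // P x.1 }
  have hs := fun x : D => step G hG g P hP hg x.1.1 x.2 x.1.2
  choose nX nε nt nP nh nz using hs
  let seq : ℕ → D := fun n => Nat.rec (motive := fun _ => D)
    ⟨⟨∐ K, ε₀⟩, hP.coprod K fun j => hg _⟩ (fun _ x => ⟨⟨nX x, nε x⟩, nP x⟩) n
  obtain ⟨Z, hZ, u, e, hu, he, hc⟩ := telescope G hG P hP (fun n => (seq n).1.1)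
    (fun n => (seq n).2) (fun n => (seq n).1.2) (fun n => nt (seq n)) (fun n => nh (seq n))
  refine ⟨Z, e, hZ, fun i => ⟨?_, ?_⟩⟩
  · intro f₁ f₂ hf
    rw [← sub_eq_zero]
    obtain ⟨n, k, hk⟩ := hc _ (hgc i) (f₁ - f₂)
    have : G.map (f₁ - f₂) ≫ e = 0 := by
      dsimp at hf
      rw [G.map_sub, Preadditive.sub_comp, hf, sub_self]
    rw [hk, Functor.map_comp, assoc, he] at this
    have h0 := nz (seq n) i k this
    rw [hk, ← hu]
    erw [← assoc, h0, zero_comp]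
  · intro y
    refine ⟨Sigma.ι K ⟨i, y⟩ ≫ u 0, ?_⟩
    change G.map (Sigma.ι K ⟨i, y⟩ ≫ u 0) ≫ e = y
    rw [Functor.map_comp, assoc, he]
    exact hε₀ ⟨i, y⟩

/-- Maps inducing bijections on all generators are isomorphisms. -/
lemma isIso_of_gens {ι : Type v} (g : ι → T)
    (hsh : ∀ i (n : ℤ), ∃ j, Nonempty ((g i)⟦n⟧ ≅ g j))
    (hz : ∀ Y : T, (∀ i (f : g i ⟶ Y), f = 0) → IsZero Y) {A B : T} (f : A ⟶ B)
    (hf : ∀ i, Function.Bijective (fun h : g i ⟶ A => h ≫ f)) : IsIso f := by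
  obtain ⟨C, p, q, hA⟩ := distinguished_cocone_triangle f
  refine (Triangle.isZero₃_iff_isIso₁ _ hA).1 (hz _ fun i h => ?_)
  change g i ⟶ C at h
  have hinj : ∀ k : g i ⟶ A⟦(1 : ℤ)⟧, k ≫ f⟦(1 : ℤ)⟧' = 0 → k = 0 := by
    intro k hk
    refine shift_inj f (fun k hk => ?_) k hk
    obtain ⟨j, ⟨e⟩⟩ := hsh i (-1)
    have h2 : e.inv ≫ k = 0 := (hf j).1 (by
      dsimp only
      rw [assoc, hk, comp_zero, zero_comp])
    rw [← cancel_epi e.inv, h2, comp_zero]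
  have hq : h ≫ q = 0 := hinj _ (by
    have : q ≫ f⟦(1 : ℤ)⟧' = 0 := comp_distTriang_mor_zero₃₁ _ hA
    rw [assoc, this, comp_zero])
  obtain ⟨b, hb⟩ : ∃ b : g i ⟶ B, h = b ≫ p := Triangle.coyoneda_exact₃ _ hA h hq
  obtain ⟨a, ha⟩ := (hf i).2 b
  change a ≫ f = b at ha
  have : f ≫ p = 0 := comp_distTriang_mor_zero₁₂ _ hA
  have h4 : h = 0 := by rw [hb, ← ha, assoc, this, comp_zero]
  exact h4

/-- Shift-closed generators. -/
lemma exists_gens (hT : CompactlyGenerated T) : ∃ (ι : Type v) (g : ι → T),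
    (∀ i, IsCompactObj (g i)) ∧ (∀ i (n : ℤ), ∃ j, Nonempty ((g i)⟦n⟧ ≅ g j)) ∧
    (∀ Y : T, (∀ i (f : g i ⟶ Y), f = 0) → IsZero Y) := by
  obtain ⟨_, ι, g, hg, hz⟩ := hT
  refine ⟨ι × ULift.{v} ℤ, fun x => (g x.1)⟦x.2.down⟧, fun x => isCompactObj_shift (hg _) _,
    fun x n => ⟨⟨x.1, ⟨x.2.down + n⟩⟩, ⟨(shiftFunctorAdd T x.2.down n).symm.app (g x.1)⟩⟩,
    fun Y hY => hz Y fun i n f => ?_⟩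
  let E := (shiftEquiv T n).symm.toAdjunction
  apply (E.homEquiv _ _).symm.injective
  exact (hY ⟨i, ⟨-n⟩⟩ _).trans (hY ⟨i, ⟨-n⟩⟩ _).symm

lemma localizing_all [HasCoproducts.{v} T] {ι : Type v} (g : ι → T)
    (hgc : ∀ i, IsCompactObj (g i))
    (hsh : ∀ i (n : ℤ), ∃ j, Nonempty ((g i)⟦n⟧ ≅ g j))
    (hz : ∀ Y : T, (∀ i (f : g i ⟶ Y), f = 0) → IsZero Y)
    (P : T → Prop) (hP : Localizing P) (hiso : ∀ {A B : T}, (A ≅ B) → P A → P B)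
    (hg : ∀ i, P (g i)) (Z : T) : P Z := by
  obtain ⟨X, ε, hX, hb⟩ := approx (𝟭 T) (fun _ => inferInstance) g hgc P hP hg Z
  have : IsIso (show X ⟶ Z from ε) := isIso_of_gens g hsh hz _ hb
  exact hiso (asIso (show X ⟶ Z from ε)) hX

lemma brown (hT : CompactlyGenerated T) (G : T ⥤ S) [G.CommShift ℤ] [G.IsTriangulated]
    (hG : PreservesCoproducts G) (Y : S) :
    ∃ (X : T) (ε : G.obj X ⟶ Y), ∀ Z, Bij G ε Z := by
  obtain ⟨ι, g, hgc, hsh, hz⟩ := exists_gens hT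
  have : HasCoproducts.{v} T := hT.1
  obtain ⟨X, ε, -, hb⟩ := approx G hG g hgc (fun _ => True)
    ⟨fun _ _ => trivial, fun _ _ _ _ => trivial⟩ (fun _ => trivial) Y
  refine ⟨X, ε, fun Z => ?_⟩
  have key : ∀ n : ℤ, Bij G ε (Z⟦n⟧) := by
    refine localizing_all g hgc hsh hz (fun Z => ∀ n : ℤ, Bij G ε (Z⟦n⟧)) ⟨?_, ?_⟩
      (fun e h n => (h n).of_iso ((shiftFunctor T n).mapIso e)) ?_ Z
    · intro J K hK n
      have hs : PreservesCoproducts (shiftFunctor T n) := fun _ => inferInstance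
      have hsG : PreservesCoproducts (shiftFunctor T n ⋙ G) := fun J => by
        have := hG J
        have := hs J
        infer_instance
      constructor
      · intro a b hab
        refine coprod_hom_ext hs K fun j => (hK j n).1 ?_
        dsimp at hab ⊢
        rw [Functor.map_comp, assoc, hab, Functor.map_comp, assoc]
      · intro y
        choose f hf using fun j => (hK j n).2 (G.map ((Sigma.ι K j)⟦n⟧') ≫ y)
        obtain ⟨b, hb⟩ := exists_desc hs K f
        refine ⟨b, coprod_hom_ext hsG K fun j => ?_⟩
        refine Eq.trans ?_ (hf j)
        dsimp
        rw [← hb j, Functor.map_comp, assoc]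
    · intro A hA h1 h2 n
      have hA' := Triangle.shift_distinguished A hA n
      exact Bij.five G hA' (h1 n) (h2 n)
        ((h1 (n + 1)).of_iso ((shiftFunctorAdd T n 1).app _))
        ((h2 (n + 1)).of_iso ((shiftFunctorAdd T n 1).app _))
    · intro i n
      obtain ⟨j, ⟨e⟩⟩ := hsh i n
      exact (hb j).of_iso e.symm
  exact (key 0).of_iso ((shiftFunctorZero T ℤ).app Z)

lemma isLeftAdjoint_of_brown (hT : CompactlyGenerated T) (G : T ⥤ S) [G.CommShift ℤ]
    [G.IsTriangulated] (hG : PreservesCoproducts G) : G.IsLeftAdjoint := by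
  choose H ε hε using brown hT G hG
  let e : ∀ X Y, (G.obj X ⟶ Y) ≃ (X ⟶ H Y) := fun X Y => (Equiv.ofBijective _ (hε Y X)).symm
  exact ⟨_, ⟨Adjunction.adjunctionOfEquivRight e (fun X' X Y f h => by
    apply (e X' Y).symm.injective
    obtain ⟨k, rfl⟩ := (e X Y).symm.surjective h
    simp only [Equiv.symm_apply_apply, Equiv.apply_symm_apply]
    change G.map f ≫ (G.map k ≫ ε Y) = G.map (f ≫ k) ≫ ε Y
    rw [Functor.map_comp, assoc])⟩⟩

lemma preserves_of_compact (hS : CompactlyGenerated S) (hT : CompactlyGenerated T)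
    (F : S ⥤ T) (G : T ⥤ S) [F.Additive] (adj : F ⊣ G)
    (hF : ∀ X : S, IsCompactObj X → IsCompactObj (F.obj X)) : PreservesCoproducts G := by
  intro J
  obtain ⟨ι, g, hgc, hsh, hz⟩ := exists_gens hS
  have : HasCoproducts.{v} T := hT.1
  have : HasCoproducts.{v} S := hS.1
  have : G.Additive := adj.right_adjoint_additive
  suffices ∀ Y : J → T, PreservesColimit (Discrete.functor Y) G from
    preservesColimitsOfShape_of_discrete G
  intro Y
  suffices IsIso (sigmaComparison G Y) from PreservesCoproduct.of_iso_comparison G Y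
  apply isIso_of_gens g hsh hz
  intro i
  constructor
  · intro a b hab
    rw [← sub_eq_zero]
    refine (hgc i).eq_zero _ _ fun j => ?_
    have h1 : sigmaComparison G Y ≫ G.map (proj Y j) = proj (fun j => G.obj (Y j)) j := by
      apply Sigma.hom_ext
      intro k
      rw [ι_comp_sigmaComparison_assoc, ← G.map_comp]
      by_cases hk : k = j
      · subst hk
        rw [ι_proj_self, ι_proj_self, G.map_id]
      · rw [ι_proj_ne _ hk, ι_proj_ne _ hk, G.map_zero]
    dsimp at hab
    rw [← h1, ← assoc, Preadditive.sub_comp, hab, sub_self, zero_comp]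
  · intro f
    let A : AddSubgroup (F.obj (g i) ⟶ ∐ Y) :=
      { carrier := { h | ∃ a : g i ⟶ ∐ (fun j => G.obj (Y j)),
          a ≫ sigmaComparison G Y = adj.homAddEquiv _ _ h }
        zero_mem' := ⟨0, by simp⟩
        add_mem' := by
          rintro x y ⟨a, ha⟩ ⟨b, hb⟩
          exact ⟨a + b, by rw [Preadditive.add_comp, ha, hb, map_add]⟩
        neg_mem' := by
          rintro x ⟨a, ha⟩
          exact ⟨-a, by rw [Preadditive.neg_comp, ha, map_neg]⟩ }
    obtain ⟨a, ha⟩ := (hF _ (hgc i)).eq_top Y A (fun j k =>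
      ⟨adj.homEquiv _ _ k ≫ Sigma.ι (fun j => G.obj (Y j)) j, by
        rw [assoc, ι_comp_sigmaComparison]
        exact (adj.homEquiv_naturality_right _ _).symm⟩) ((adj.homAddEquiv _ _).symm f)
    exact ⟨a, by simpa using ha⟩

/-- for a triangle functor `F` between compactly generated triangulated
categories with right adjoint `G`, the conditions "`G` preserves coproducts",
"`G` admits a right adjoint" and "`F` preserves compact objects" are equivalent. -/
theorem right_adjoint_preserves_coproducts_iff
    (hS : CompactlyGenerated S) (hT : CompactlyGenerated T)
    (F : S ⥤ T) [F.CommShift ℤ] [F.IsTriangulated]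
    (G : T ⥤ S) (adj : F ⊣ G) :
    (PreservesCoproducts G ↔ G.IsLeftAdjoint) ∧
    (PreservesCoproducts G ↔ (∀ X : S, IsCompactObj X → IsCompactObj (F.obj X))) := by
  have hFA : F.Additive := inferInstance
  refine ⟨⟨fun hG => ?_, fun h J => inferInstance⟩, ⟨fun hG X hX => ?_, fun h => ?_⟩⟩
  · let := adj.rightAdjointCommShift ℤ
    have := adj.commShift_of_leftAdjoint ℤ
    have := adj.isTriangulated_rightAdjoint
    exact isLeftAdjoint_of_brown hT G hG
  · exact isCompactObj_of_adj adj hG X hX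
  · exact preserves_of_compact hS hT F G adj h

end LadderFormalization
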